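/- Let V = ℝ^d with d ≥ 2 and let C be a compact connected subgroup of GL(d,ℝ) such that the only vector v ∈ V fixed by every element of C is v = 0. Let λ be a Borel probability measure on V invariant under every element of C, and suppose that λ(W) = 0 for every proper vector subspace W of V. Then the Fourier transform of λ vanishes at infinity: for every ε > 0 there exists R > 0 such that |∫ exp(i⟨ξ, x⟩) dλ(x)| < ε for all ξ ∈ ℝ^d with ‖ξ‖ > R. -/

import Mathlib

/-!
Suppose the Fourier transform stays away from `0` along a sequence `ξ n → ∞`; after passing to a
subsequence, the directions of `ξ n` converge to some `u ≠ 0`. The argument has two halves.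

*A one-parameter subgroup moving `u`.* If the row vector `u` were fixed by `C`, then averaging the
orbit of the column vector `u` against Haar measure on `C` would give a fixed vector with nonzero
pairing against `u` (`exists_mulVec_fixed`). So the stabilizer `S` of `u` in `C` is proper and,
`C` being connected, not open. Hence elements of `C \ S` accumulate at `1`. Replacing each of them
by the element `h n` of its coset `S * g n` closest to `1`, a limit `X` of
`(h n - 1) / ‖h n - 1‖` satisfies `exp (t X) ∈ C` for `t ≥ 0`, since powers of `h n` approximate
`exp (t X)` (`exp_mem_of_tendsto`). If `exp (t X)` stayed in `S`, then `exp (-‖h n - 1‖ X) * h n`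
would be closer to `1` in the same coset (`exists_one_param`). This avoids the closed subgroup
theorem and yields `X` with `u X ≠ 0` (`exists_generator`).

*Decay along `X`.* Invariance lets one average the integrand over `exp (r δ X)`, `0 ≤ r ≤ 1`,
where `δ = ‖ξ‖ ^ (-2/3)`. On this window the phase `⟨ξ, exp (r δ X) x⟩` is affine in `r` up to
`O(‖ξ‖ δ²) → 0`, with slope `δ ⟨ξ, X x⟩` of order `‖ξ‖ δ → ∞` as soon as `⟨u, X x⟩ ≠ 0`. The `x`
violating this form the kernel of the nonzero functional `u X`, which is `lam`-null. Dominated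
convergence concludes (`tendsto_fourier_zero`).
-/

open MeasureTheory Matrix
open Filter Topology

/-! ### One-parameter subgroups in compact matrix groups -/

/-- Telescoping comparison of powers. Only uniform bounds on the powers are needed, not
`‖a‖, ‖b‖ ≤ 1`; the extra factor `b ^ j` makes the induction on `k` go through. -/
theorem norm_pow_sub_pow_mul_le {A : Type*} [NormedRing A] (a b : A) (N : ℕ) (M M' : ℝ)
    (hM : 0 ≤ M) (ha : ∀ k, ‖a ^ k‖ ≤ M) (hb : ∀ k ≤ N, ‖b ^ k‖ ≤ M') (k : ℕ) :
    ∀ j, k + j ≤ N → ‖(a ^ k - b ^ k) * b ^ j‖ ≤ k * (M * ‖a - b‖ * M') := by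
  induction k with
  | zero => intro j _; simp
  | succ k ih =>
    intro j hj
    have h1 : (a ^ (k + 1) - b ^ (k + 1)) * b ^ j
        = a ^ k * (a - b) * b ^ j + (a ^ k - b ^ k) * b ^ (j + 1) := by
      rw [pow_succ a, pow_succ b, pow_succ' b j]; noncomm_ring
    have h2 : ‖a ^ k * (a - b) * b ^ j‖ ≤ M * ‖a - b‖ * M' := by
      have := hb j (by omega)
      calc _ ≤ ‖a ^ k‖ * ‖a - b‖ * ‖b ^ j‖ :=
            (norm_mul_le _ _).trans (by gcongr; exact norm_mul_le _ _)
        _ ≤ _ := by gcongr; exact ha k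
    have h3 := ih (j + 1) (by omega)
    rw [h1]
    calc _ ≤ _ := norm_add_le _ _
      _ ≤ M * ‖a - b‖ * M' + k * (M * ‖a - b‖ * M') := add_le_add h2 h3
      _ = _ := by push_cast; ring

theorem tendsto_exp_sub_one_div {A : Type*} [NormedRing A] [NormedAlgebra ℝ A] [CompleteSpace A]
    (X : A) {e : ℕ → ℝ} (hpos : ∀ n, e n ≠ 0) (h0 : Tendsto e atTop (𝓝 0)) :
    Tendsto (fun n => (e n)⁻¹ • (NormedSpace.exp (e n • X) - 1)) atTop (𝓝 X) := by
  have h := hasDerivAt_exp_smul_const (𝕂 := ℝ) X (0 : ℝ)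
  simp only [zero_smul, NormedSpace.exp_zero, one_mul] at h
  have := (hasDerivAt_iff_tendsto_slope_zero.1 h).comp
    (tendsto_nhdsWithin_iff.2 ⟨h0, Eventually.of_forall hpos⟩)
  simpa [Function.comp_def] using this

/-- A tangent direction at `1` of a compact multiplicative monoid `K` exponentiates into `K`:
`h n ^ ⌊t / e n⌋` converges to `exp (t X)`. -/
theorem exp_mem_of_tendsto {A : Type*} [NormedRing A] [NormedAlgebra ℝ A] [CompleteSpace A]
    {K : Set A} (hK : IsCompact K) (h1 : (1 : A) ∈ K) (hmul : ∀ a ∈ K, ∀ b ∈ K, a * b ∈ K)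
    {h : ℕ → A} (hh : ∀ n, h n ∈ K) {e : ℕ → ℝ} (hpos : ∀ n, 0 < e n)
    (h0 : Tendsto e atTop (𝓝 0)) {X : A}
    (hX : Tendsto (fun n => (e n)⁻¹ • (h n - 1)) atTop (𝓝 X)) {t : ℝ} (ht : 0 ≤ t) :
    NormedSpace.exp (t • X) ∈ K := by
  let _ : NormedAlgebra ℚ A := NormedAlgebra.restrictScalars ℚ ℝ A
  have hpow : ∀ n (k : ℕ), h n ^ k ∈ K := by
    intro n k
    induction k with
    | zero => simpa using h1
    | succ k ih => rw [pow_succ]; exact hmul _ ih _ (hh n)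
  obtain ⟨M, hM⟩ := hK.isBounded.exists_norm_le
  have hM0 : 0 ≤ M := (norm_nonneg _).trans (hM 1 h1)
  have hcont : Continuous fun s : ℝ => NormedSpace.exp (s • X) :=
    (NormedSpace.exp_continuous ).comp (by fun_prop)
  obtain ⟨M', hM'⟩ := ((isCompact_Icc (a := (0:ℝ)) (b := t)).image hcont).isBounded.exists_norm_le
  have hM'0 : 0 ≤ M' := (norm_nonneg _).trans (hM' _ ⟨0, ⟨le_rfl, ht⟩, rfl⟩)
  set k : ℕ → ℕ := fun n => ⌊t / e n⌋₊ with hk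
  have hkle : ∀ n, k n * e n ≤ t := fun n => by
    have := Nat.floor_le (div_nonneg ht (hpos n).le)
    rwa [le_div_iff₀ (hpos n)] at this
  have hkge : ∀ n, t - e n ≤ k n * e n := fun n => by
    have := Nat.lt_floor_add_one (t / e n)
    rw [div_lt_iff₀ (hpos n)] at this
    simp only [hk]; linarith
  have hkt : Tendsto (fun n => k n * e n) atTop (𝓝 t) := by
    refine tendsto_of_tendsto_of_tendsto_of_le_of_le ?_ tendsto_const_nhds hkge hkle
    simpa using tendsto_const_nhds.sub h0
  have hbp : ∀ n (j : ℕ), NormedSpace.exp (e n • X) ^ j = NormedSpace.exp ((j * e n) • X) := by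
    intro n j
    rw [← NormedSpace.exp_nsmul, ← Nat.cast_smul_eq_nsmul ℝ, smul_smul]
  have hlim : Tendsto (fun n => h n ^ k n) atTop (𝓝 (NormedSpace.exp (t • X))) := by
    have hB : Tendsto (fun n => NormedSpace.exp (e n • X) ^ k n) atTop
        (𝓝 (NormedSpace.exp (t • X))) := by
      simp only [hbp]
      exact (hcont.tendsto t).comp hkt
    have hD : Tendsto (fun n => h n ^ k n - NormedSpace.exp (e n • X) ^ k n) atTop (𝓝 0) := by
      have hs : Tendsto (fun n => t * (M * ‖(e n)⁻¹ • (h n - 1)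
          - (e n)⁻¹ • (NormedSpace.exp (e n • X) - 1)‖ * M')) atTop (𝓝 0) := by
        have := (hX.sub (tendsto_exp_sub_one_div X (fun n => (hpos n).ne') h0)).norm
        simpa using ((this.const_mul M).mul_const M').const_mul t
      refine squeeze_zero_norm (fun n => ?_) hs
      have hb := norm_pow_sub_pow_mul_le (h n) (NormedSpace.exp (e n • X)) (k n) M M' hM0
        (fun j => hM _ (hpow n j)) (fun j hj => by
          rw [hbp]
          refine hM' _ ⟨_, ⟨mul_nonneg (Nat.cast_nonneg _) (hpos n).le, ?_⟩, rfl⟩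
          refine le_trans ?_ (hkle n)
          have := (hpos n).le
          gcongr) (k n) 0 le_rfl
      simp only [pow_zero, mul_one] at hb
      refine hb.trans ?_
      rw [← smul_sub, sub_sub_sub_cancel_right, norm_smul, Real.norm_of_nonneg
        (inv_nonneg.2 (hpos n).le)]
      have hkn : (k n : ℝ) ≤ t * (e n)⁻¹ := by
        rw [← div_eq_mul_inv, le_div_iff₀ (hpos n)]; exact hkle n
      calc _ ≤ t * (e n)⁻¹ * (M * ‖h n - NormedSpace.exp (e n • X)‖ * M') := by gcongr
        _ = _ := by ring
    simpa using hD.add hB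
  exact hK.isClosed.mem_of_tendsto hlim (Eventually.of_forall fun n => hpow n _)

/-- If a closed subgroup `S` of a compact monoid `K` is not a neighbourhood of `1` in `K`, some
one-parameter semigroup lies in `K` but not in `S`. -/
theorem exists_one_param {A : Type*} [NormedRing A] [NormedAlgebra ℝ A] [FiniteDimensional ℝ A]
    {K S : Set A} (hK : IsCompact K) (h1 : (1 : A) ∈ K) (hmul : ∀ a ∈ K, ∀ b ∈ K, a * b ∈ K)
    (hSK : S ⊆ K) (hS : IsClosed S) (hS1 : (1 : A) ∈ S) (hSmul : ∀ a ∈ S, ∀ b ∈ S, a * b ∈ S)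
    (hSinv : ∀ a ∈ S, ∃ b ∈ S, a * b = 1 ∧ b * a = 1)
    (hcl : (1 : A) ∈ closure (K \ S)) :
    ∃ X : A, (∀ t : ℝ, 0 ≤ t → NormedSpace.exp (t • X) ∈ K) ∧
      ∃ t : ℝ, 0 ≤ t ∧ NormedSpace.exp (t • X) ∉ S := by
  let _ : NormedAlgebra ℚ A := NormedAlgebra.restrictScalars ℚ ℝ A
  have : CompleteSpace A := FiniteDimensional.complete ℝ A
  have : ProperSpace A := FiniteDimensional.proper_real A
  obtain ⟨g, hg, hg1⟩ := mem_closure_iff_seq_limit.1 hcl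
  have hSc : IsCompact S := hK.of_isClosed_subset hS hSK
  have hmin : ∀ n, ∃ s ∈ S, ∀ s' ∈ S, ‖s * g n - 1‖ ≤ ‖s' * g n - 1‖ := by
    intro n
    obtain ⟨s, hs, hm⟩ := hSc.exists_isMinOn ⟨1, hS1⟩
      (f := fun s => ‖s * g n - 1‖) (by fun_prop)
    exact ⟨s, hs, fun s' hs' => hm hs'⟩
  choose s hs hmin using hmin
  set h : ℕ → A := fun n => s n * g n with hh
  set e : ℕ → ℝ := fun n => ‖h n - 1‖ with he
  have hne : ∀ n, h n ≠ 1 := by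
    intro n hn
    obtain ⟨b, hb, -, hb2⟩ := hSinv _ (hs n)
    apply (hg n).2
    have : g n = b := by
      calc g n = b * s n * g n := by rw [hb2, one_mul]
        _ = b * h n := by rw [mul_assoc]
        _ = b := by rw [hn, mul_one]
    rwa [this]
  have hpos : ∀ n, 0 < e n := fun n => norm_pos_iff.2 (sub_ne_zero.2 (hne n))
  have he0 : Tendsto e atTop (𝓝 0) := by
    refine squeeze_zero (fun n => (hpos n).le) (fun n => ?_)
      (g := fun n => ‖g n - 1‖) ?_
    · simpa using hmin n 1 hS1
    · simpa using (hg1.sub_const 1).norm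
  have hh1 : Tendsto h atTop (𝓝 1) := tendsto_iff_norm_sub_tendsto_zero.2 he0
  obtain ⟨X, -, φ, hφ, hX⟩ := (isCompact_sphere (0 : A) 1).tendsto_subseq
    (x := fun n => (e n)⁻¹ • (h n - 1)) (fun n => by
      simp only [mem_sphere_zero_iff_norm, norm_smul, norm_inv, Real.norm_of_nonneg (hpos n).le]
      exact inv_mul_cancel₀ (hpos n).ne')
  have hφ' := hφ.tendsto_atTop
  refine ⟨X, fun t ht => exp_mem_of_tendsto hK h1 hmul (h := h ∘ φ) (e := e ∘ φ)
    (fun n => hmul _ (hSK (hs _)) _ (hg _).1) (fun n => hpos _) (he0.comp hφ') hX ht, ?_⟩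
  by_contra! hcon
  -- If the one-parameter group stayed in `S`, multiplying `h n` by `exp (-(e n) X)` would
  -- bring it closer to `1` within its coset.
  have hneg : ∀ t : ℝ, 0 ≤ t → NormedSpace.exp ((-t) • X) ∈ S := by
    intro t ht
    obtain ⟨b, hb, hb1, -⟩ := hSinv _ (hcon t ht)
    have : NormedSpace.exp ((-t) • X) * NormedSpace.exp (t • X) = 1 := by
      rw [← NormedSpace.exp_add_of_commute]
      · simp
      · exact ((Commute.refl X).smul_left _).smul_right _
    rwa [left_inv_eq_right_inv this hb1]
  have hlim : Tendsto (fun n => (e (φ n))⁻¹ •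
      (NormedSpace.exp ((-e (φ n)) • X) * h (φ n) - 1)) atTop (𝓝 0) := by
    have h2 := tendsto_exp_sub_one_div X (e := fun n => -e (φ n))
      (fun n => neg_ne_zero.2 (hpos _).ne') (by simpa using (he0.comp hφ').neg)
    have h3 := ((h2.neg).mul (hh1.comp hφ')).add hX
    simp only [mul_one, neg_add_cancel] at h3
    refine h3.congr fun n => ?_
    simp only [Function.comp, inv_neg, neg_smul, neg_neg, smul_mul_assoc, ← smul_add]
    congr 1
    noncomm_ring
  have hge : ∀ n, 1 ≤ ‖(e (φ n))⁻¹ •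
      (NormedSpace.exp ((-e (φ n)) • X) * h (φ n) - 1)‖ := by
    intro n
    have := hmin (φ n) _ (hSmul _ (hneg _ (hpos (φ n)).le) _ (hs (φ n)))
    rw [mul_assoc] at this
    rw [norm_smul, norm_inv, Real.norm_of_nonneg (hpos _).le, ← div_eq_inv_mul,
      one_le_div (hpos _)]
    exact this
  have := ge_of_tendsto' hlim.norm hge
  norm_num at this

/-! ### Oscillatory integrals and decay along a one-parameter subgroup -/

theorem norm_integral_exp_affine_le (A : ℝ) {a : ℝ} (ha : a ≠ 0) :
    ‖∫ r in (0:ℝ)..1, Complex.exp (Complex.I * ((A + r * a : ℝ) : ℂ))‖ ≤ 2 / |a| := by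
  have h1 : ∀ r : ℝ, Complex.exp (Complex.I * ((A + r * a : ℝ) : ℂ))
      = Complex.exp (Complex.I * (A : ℝ)) * Complex.exp ((Complex.I * a) * r) := by
    intro r
    rw [← Complex.exp_add]; congr 1; push_cast; ring
  have hc : Complex.I * (a : ℂ) ≠ 0 := mul_ne_zero Complex.I_ne_zero (by exact_mod_cast ha)
  simp_rw [h1]
  rw [intervalIntegral.integral_const_mul, integral_exp_mul_complex hc, norm_mul, norm_div,
    Complex.norm_exp_I_mul_ofReal, one_mul, norm_mul, Complex.norm_I, one_mul, Complex.norm_real,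
    Real.norm_eq_abs]
  gcongr
  refine (norm_sub_le _ _).trans ?_
  simp [Complex.norm_exp_I_mul_ofReal]
  norm_num

theorem norm_exp_I_sub_le (x y : ℝ) :
    ‖Complex.exp (Complex.I * x) - Complex.exp (Complex.I * y)‖ ≤ |x - y| := by
  have : Complex.exp (Complex.I * x) - Complex.exp (Complex.I * y)
      = Complex.exp (Complex.I * y) * (Complex.exp (Complex.I * ((x - y : ℝ) : ℂ)) - 1) := by
    rw [mul_sub, ← Complex.exp_add]; congr 2
    · push_cast; ring
    · simp
  rw [this, norm_mul, Complex.norm_exp_I_mul_ofReal, one_mul]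
  exact Real.norm_exp_I_mul_ofReal_sub_one_le

/-- A phase within `B` of an affine function of slope `a` has oscillatory integral at most
`2 / |a| + B`. -/
theorem norm_integral_exp_le_of_near_affine {φ : ℝ → ℝ} (hφ : Continuous φ) (A : ℝ) {a B : ℝ}
    (ha : a ≠ 0) (hB : ∀ r, 0 ≤ r → r ≤ 1 → |φ r - (A + r * a)| ≤ B) :
    ‖∫ r in (0:ℝ)..1, Complex.exp (Complex.I * (φ r : ℂ))‖ ≤ 2 / |a| + B := by
  have hsub : ‖∫ r in (0:ℝ)..1, (Complex.exp (Complex.I * (φ r : ℂ))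
      - Complex.exp (Complex.I * ((A + r * a : ℝ) : ℂ)))‖ ≤ B := by
    have := intervalIntegral.norm_integral_le_of_norm_le_const (a := (0:ℝ)) (b := 1) (C := B)
      (f := fun r => Complex.exp (Complex.I * (φ r : ℂ))
        - Complex.exp (Complex.I * ((A + r * a : ℝ) : ℂ))) (fun r hr => by
        rw [Set.uIoc_of_le zero_le_one] at hr
        exact (norm_exp_I_sub_le _ _).trans (hB r hr.1.le hr.2))
    simpa using this
  rw [intervalIntegral.integral_sub (Continuous.intervalIntegrable (by fun_prop) _ _)
    (Continuous.intervalIntegrable (by fun_prop) _ _)] at hsub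
  have h2 := norm_integral_exp_affine_le A ha
  have h3 := norm_le_norm_add_norm_sub'
    (∫ r in (0:ℝ)..1, Complex.exp (Complex.I * (φ r : ℂ)))
    (∫ r in (0:ℝ)..1, Complex.exp (Complex.I * ((A + r * a : ℝ) : ℂ)))
  linarith

/-- Second-order Taylor remainder of `s ↦ exp (s X)` at `0`. -/
theorem exists_exp_remainder_bound {A : Type*} [NormedRing A] [NormedAlgebra ℝ A] [CompleteSpace A]
    (X : A) : ∃ c s₀ : ℝ, 0 ≤ c ∧ 0 < s₀ ∧ ∀ s : ℝ, 0 ≤ s → s < s₀ →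
      ‖NormedSpace.exp (s • X) - 1 - s • X‖ ≤ c * s ^ 2 := by
  let _ : NormedAlgebra ℚ A := NormedAlgebra.restrictScalars ℚ ℝ A
  have h := (NormedSpace.exp_hasFPowerSeriesAt_zero (𝕂 := ℝ) (𝔸 := A)).isBigO_sub_partialSum_pow 2
  have ht : Tendsto (fun s : ℝ => s • X) (𝓝 0) (𝓝 0) := by
    have : Continuous fun s : ℝ => s • X := by fun_prop
    simpa using this.tendsto 0
  obtain ⟨c, hc, hO⟩ := (h.comp_tendsto ht).exists_pos
  rw [Asymptotics.isBigOWith_iff, Metric.eventually_nhds_iff] at hO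
  obtain ⟨s₀, hs₀, h⟩ := hO
  refine ⟨c * ‖X‖ ^ 2, s₀, by positivity, hs₀, fun s hs hs' => ?_⟩
  have := h (y := s) (by simpa [abs_of_nonneg hs] using hs')
  simp only [Function.comp, FormalMultilinearSeries.partialSum, Finset.sum_range_succ,
    Finset.sum_range_zero, NormedSpace.expSeries_apply_eq, zero_add, norm_pow,
    norm_smul, Real.norm_eq_abs, abs_mul, abs_of_nonneg hs, abs_norm] at this
  simp only [Nat.factorial, pow_zero, pow_one, Nat.cast_one, inv_one, one_smul, mul_one] at this
  rw [sub_sub]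
  refine this.trans (le_of_eq (by ring))

theorem abs_dotProduct_le {ι : Type*} [Fintype ι] (v w : ι → ℝ) :
    |v ⬝ᵥ w| ≤ Fintype.card ι * (‖v‖ * ‖w‖) := by
  calc |v ⬝ᵥ w| ≤ ∑ i, |v i * w i| := Finset.abs_sum_le_sum_abs _ _
    _ ≤ ∑ _i : ι, ‖v‖ * ‖w‖ := Finset.sum_le_sum fun i _ => by
        rw [abs_mul]
        exact mul_le_mul (norm_le_pi_norm v i) (norm_le_pi_norm w i) (abs_nonneg _) (norm_nonneg _)
    _ = _ := by simp

/-- Decay of the Fourier transform along a sequence with limiting direction `u`, for a measure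
invariant under `exp (s X)`, `s ≥ 0`, giving no mass to the kernel of `u X`. -/
theorem tendsto_fourier_zero {ι : Type*} [Fintype ι] [DecidableEq ι] (X : Matrix ι ι ℝ)
    (lam : Measure (ι → ℝ)) [IsProbabilityMeasure lam]
    (hinv : ∀ s : ℝ, 0 ≤ s → lam.map (fun v => NormedSpace.exp (s • X) *ᵥ v) = lam)
    {u : ι → ℝ} (hnull : lam {x | u ⬝ᵥ (X *ᵥ x) = 0} = 0)
    {ξ : ℕ → ι → ℝ} (hξ : Tendsto (fun n => ‖ξ n‖) atTop atTop)
    (hu : Tendsto (fun n => ‖ξ n‖⁻¹ • ξ n) atTop (𝓝 u)) :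
    Tendsto (fun n => ∫ x, Complex.exp (Complex.I * ((ξ n ⬝ᵥ x : ℝ) : ℂ)) ∂lam) atTop (𝓝 0) := by
  let _ : NormedRing (Matrix ι ι ℝ) := Matrix.linftyOpNormedRing
  let _ : NormedAlgebra ℝ (Matrix ι ι ℝ) := Matrix.linftyOpNormedAlgebra
  let _ : NormedAlgebra ℚ (Matrix ι ι ℝ) := NormedAlgebra.restrictScalars ℚ ℝ _
  -- With `‖ξ‖ = τ ^ 3` and `δ = τ ^ (-2)` one has `‖ξ‖ δ = τ → ∞` while `‖ξ‖ δ ^ 2 = τ⁻¹ → 0`.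
  set τ : ℕ → ℝ := fun n => ‖ξ n‖ ^ (1 / 3 : ℝ) with hτ
  have hτ0 : ∀ n, 0 ≤ τ n := fun n => by positivity
  have hτ3 : ∀ n, ‖ξ n‖ = τ n ^ 3 := fun n => by
    simp only [hτ]
    rw [← Real.rpow_natCast, ← Real.rpow_mul (norm_nonneg _)]
    norm_num
  have hτlim : Tendsto τ atTop atTop :=
    (tendsto_rpow_atTop (by norm_num : (0:ℝ) < 1 / 3)).comp hξ
  set δ : ℕ → ℝ := fun n => (τ n ^ 2)⁻¹ with hδ
  have hδ0 : ∀ n, 0 ≤ δ n := fun n => by positivity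
  have hδlim : Tendsto δ atTop (𝓝 0) :=
    tendsto_inv_atTop_zero.comp ((tendsto_pow_atTop two_ne_zero).comp hτlim)
  have hexp : Continuous fun s : ℝ => NormedSpace.exp (s • X) :=
    NormedSpace.exp_continuous.comp (by fun_prop)
  have hphase : ∀ n, Continuous fun p : ℝ × (ι → ℝ) =>
      ξ n ⬝ᵥ (NormedSpace.exp ((p.1 * δ n) • X) *ᵥ p.2) := fun n =>
    continuous_const.dotProduct ((hexp.comp (by fun_prop)).matrix_mulVec continuous_snd)
  have hcont : ∀ n, Continuous fun p : ℝ × (ι → ℝ) => Complex.exp (Complex.I *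
      ((ξ n ⬝ᵥ (NormedSpace.exp ((p.1 * δ n) • X) *ᵥ p.2) : ℝ) : ℂ)) := fun n => by
    have := hphase n
    fun_prop
  have hint : ∀ n, Integrable (Function.uncurry fun (r : ℝ) (x : ι → ℝ) => Complex.exp (Complex.I *
      ((ξ n ⬝ᵥ (NormedSpace.exp ((r * δ n) • X) *ᵥ x) : ℝ) : ℂ)))
      ((volume.restrict (Set.uIoc 0 1)).prod lam) := fun n => by
    have : IsFiniteMeasure (volume.restrict (Set.uIoc (0:ℝ) 1)) := by
      rw [Set.uIoc_of_le zero_le_one]; infer_instance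
    refine Integrable.of_bound (C := 1) (hcont n).aestronglyMeasurable
      (Eventually.of_forall fun p => ?_)
    exact (Complex.norm_exp_I_mul_ofReal _).le
  -- The inner integral in `x` does not depend on `r` by invariance, so it equals its average.
  have hswap : ∀ n, ∫ x, Complex.exp (Complex.I * ((ξ n ⬝ᵥ x : ℝ) : ℂ)) ∂lam
      = ∫ x, (∫ r in (0:ℝ)..1, Complex.exp (Complex.I *
      ((ξ n ⬝ᵥ (NormedSpace.exp ((r * δ n) • X) *ᵥ x) : ℝ) : ℂ))) ∂lam := by
    intro n
    rw [← intervalIntegral_integral_swap (hint n)]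
    have hc : ∀ r ∈ Set.uIcc (0:ℝ) 1, ∫ x, Complex.exp (Complex.I *
        ((ξ n ⬝ᵥ (NormedSpace.exp ((r * δ n) • X) *ᵥ x) : ℝ) : ℂ)) ∂lam
        = ∫ x, Complex.exp (Complex.I * ((ξ n ⬝ᵥ x : ℝ) : ℂ)) ∂lam := by
      intro r hr
      rw [Set.uIcc_of_le zero_le_one] at hr
      conv_rhs => rw [← hinv (r * δ n) (mul_nonneg hr.1 (hδ0 n))]
      rw [integral_map]
      · exact (Continuous.matrix_mulVec continuous_const continuous_id).aemeasurable
      · have : Continuous fun x : ι → ℝ => ξ n ⬝ᵥ x :=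
          continuous_const.dotProduct continuous_id
        exact Continuous.aestronglyMeasurable (by fun_prop)
    rw [intervalIntegral.integral_congr hc]
    simp
  simp_rw [hswap]
  have hz : (0 : ℂ) = ∫ _x, (0:ℂ) ∂lam := by simp
  rw [hz]
  refine tendsto_integral_of_dominated_convergence (fun _ => (1:ℝ)) (fun n => ?_)
    (integrable_const _) (fun n => Eventually.of_forall fun x => ?_) ?_
  · have := (hint n).swap.integral_prod_left.aestronglyMeasurable
    simp_rw [intervalIntegral.integral_of_le (zero_le_one (α := ℝ))]
    rw [Set.uIoc_of_le zero_le_one] at this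
    exact this
  · have := intervalIntegral.norm_integral_le_of_norm_le_const (a := (0:ℝ)) (b := 1) (C := 1)
      (f := fun r => Complex.exp (Complex.I *
        ((ξ n ⬝ᵥ (NormedSpace.exp ((r * δ n) • X) *ᵥ x) : ℝ) : ℂ)))
      (fun r _ => (Complex.norm_exp_I_mul_ofReal _).le)
    simpa using this
  have hae : ∀ᵐ x ∂lam, u ⬝ᵥ (X *ᵥ x) ≠ 0 := by
    rw [ae_iff]; simpa using hnull
  filter_upwards [hae] with x hx
  obtain ⟨c, s₀, hc, hs₀, hrem⟩ := exists_exp_remainder_bound X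
  set κ : ℕ → ℝ := fun n => (‖ξ n‖⁻¹ • ξ n) ⬝ᵥ (X *ᵥ x) with hκ
  have hκlim : Tendsto κ atTop (𝓝 (u ⬝ᵥ (X *ᵥ x))) := by
    have : Continuous fun w : ι → ℝ => w ⬝ᵥ (X *ᵥ x) :=
      continuous_id.dotProduct continuous_const
    exact (this.tendsto u).comp hu
  have hbound : Tendsto (fun n => 2 / |τ n * κ n| + Fintype.card ι * (c * ‖x‖) * (τ n)⁻¹)
      atTop (𝓝 0) := by
    have h1 : Tendsto (fun n => |τ n * κ n|) atTop atTop := by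
      simp_rw [abs_mul]
      exact (tendsto_abs_atTop_atTop.comp hτlim).atTop_mul_pos (abs_pos.2 hx) hκlim.abs
    simpa using (h1.const_div_atTop 2).add
      ((tendsto_inv_atTop_zero.comp hτlim).const_mul (Fintype.card ι * (c * ‖x‖)))
  refine squeeze_zero_norm' ?_ hbound
  filter_upwards [hτlim.eventually_gt_atTop 0, hδlim.eventually_lt_const hs₀,
    hκlim.eventually_ne hx] with n hτn hδn hκn
  have hδτ : δ n * ‖ξ n‖ = τ n := by rw [hτ3]; simp only [hδ]; field_simp
  have hlin : ξ n ⬝ᵥ (X *ᵥ x) = ‖ξ n‖ * κ n := by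
    have : ‖ξ n‖ ≠ 0 := by rw [hτ3]; positivity
    simp only [hκ, smul_dotProduct, smul_eq_mul]
    field_simp
  refine norm_integral_exp_le_of_near_affine
    ((hphase n).comp (Continuous.prodMk continuous_id continuous_const)) (ξ n ⬝ᵥ x)
    (mul_ne_zero hτn.ne' hκn) (fun r hr0 hr1 => ?_)
  have heq : ξ n ⬝ᵥ (NormedSpace.exp ((r * δ n) • X) *ᵥ x) - (ξ n ⬝ᵥ x + r * (τ n * κ n))
      = ξ n ⬝ᵥ ((NormedSpace.exp ((r * δ n) • X) - 1 - (r * δ n) • X) *ᵥ x) := by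
    rw [sub_mulVec, sub_mulVec, one_mulVec, smul_mulVec, dotProduct_sub, dotProduct_sub,
      dotProduct_smul, hlin, ← hδτ, smul_eq_mul]
    ring
  have hrδ : r * δ n ≤ δ n := mul_le_of_le_one_left (hδ0 n) hr1
  have hrδ0 : 0 ≤ r * δ n := mul_nonneg hr0 (hδ0 n)
  simp only [Function.comp, id]
  rw [heq]
  calc _ ≤ Fintype.card ι * (‖ξ n‖ * (c * (δ n) ^ 2 * ‖x‖)) := by
        refine (abs_dotProduct_le _ _).trans ?_
        gcongr
        refine (linfty_opNorm_mulVec _ _).trans ?_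
        gcongr
        exact (hrem _ hrδ0 (hrδ.trans_lt hδn)).trans (by gcongr)
    _ = _ := by rw [hτ3]; simp only [hδ]; field_simp

/-! ### A generator moving a given row vector -/

/-- For a compact group, a nonzero invariant functional forces a nonzero invariant vector, by
Haar averaging. -/
theorem exists_mulVec_fixed {d : ℕ} (C : Subgroup (GL (Fin d) ℝ))
    (hC : IsCompact (C : Set (GL (Fin d) ℝ))) {u : Fin d → ℝ} (hu : u ≠ 0)
    (huC : ∀ g ∈ C, u ᵥ* (g : Matrix (Fin d) (Fin d) ℝ) = u) :
    ∃ v : Fin d → ℝ, v ≠ 0 ∧ ∀ g ∈ C, (g : Matrix (Fin d) (Fin d) ℝ) *ᵥ v = v := by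
  have : CompactSpace C := isCompact_iff_compactSpace.1 hC
  let _ : MeasurableSpace C := borel C
  have : BorelSpace C := ⟨rfl⟩
  let μ : Measure C := Measure.haar
  have hval : Continuous fun g : C => ((g : GL (Fin d) ℝ) : Matrix (Fin d) (Fin d) ℝ) :=
    Units.continuous_val.comp continuous_subtype_val
  let f : C → (Fin d → ℝ) := fun g => ((g : GL (Fin d) ℝ) : Matrix (Fin d) (Fin d) ℝ) *ᵥ u
  have hf : Continuous f := hval.matrix_mulVec continuous_const
  have hfi : Integrable f μ := hf.integrable_of_hasCompactSupport (HasCompactSupport.of_compactSpace f)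
  refine ⟨∫ g, f g ∂μ, fun h0 => ?_, fun g hg => ?_⟩
  · let L : (Fin d → ℝ) →L[ℝ] ℝ := LinearMap.toContinuousLinearMap (dotProductBilin ℝ ℝ u)
    have hL := L.integral_comp_comm hfi
    have hLf : ∀ g, L (f g) = u ⬝ᵥ u := fun g => by
      change u ⬝ᵥ (_ *ᵥ u) = _
      rw [dotProduct_mulVec, huC _ g.2]
    simp only [hLf, h0, map_zero, integral_const, smul_eq_mul, mul_eq_zero] at hL
    rcases hL with hL | hL
    · rw [measureReal_def, ENNReal.toReal_eq_zero_iff] at hL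
      rcases hL with hL | hL
      · exact (isOpen_univ.measure_pos μ ⟨1, trivial⟩).ne' hL
      · exact measure_ne_top μ _ hL
    · exact hu (dotProduct_self_eq_zero.1 hL)
  · let L : (Fin d → ℝ) →L[ℝ] (Fin d → ℝ) :=
      LinearMap.toContinuousLinearMap (Matrix.mulVecLin (g : Matrix (Fin d) (Fin d) ℝ))
    have hL := L.integral_comp_comm hfi
    have hLf : ∀ k, L (f k) = f (⟨g, hg⟩ * k) := fun k => by
      change (g : Matrix (Fin d) (Fin d) ℝ) *ᵥ (((k : GL (Fin d) ℝ) : Matrix (Fin d) (Fin d) ℝ) *ᵥ u)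
        = ((g * (k : GL (Fin d) ℝ) : GL (Fin d) ℝ) : Matrix (Fin d) (Fin d) ℝ) *ᵥ u
      rw [mulVec_mulVec, Units.val_mul]
    simp only [hLf] at hL
    rw [integral_mul_left_eq_self] at hL
    exact hL.symm

theorem vecMul_exp_eq_self {ι : Type*} [Fintype ι] [DecidableEq ι] {u : ι → ℝ} {X : Matrix ι ι ℝ}
    (h : u ᵥ* X = 0) (t : ℝ) : u ᵥ* NormedSpace.exp (t • X) = u := by
  let _ : NormedRing (Matrix ι ι ℝ) := Matrix.linftyOpNormedRing
  let _ : NormedAlgebra ℝ (Matrix ι ι ℝ) := Matrix.linftyOpNormedAlgebra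
  let L : Matrix ι ι ℝ →L[ℝ] (ι → ℝ) := LinearMap.toContinuousLinearMap
    (Matrix.vecMulBilin ℝ ℝ u)
  have hd : ∀ s : ℝ, HasDerivAt (fun s : ℝ => L (NormedSpace.exp (s • X))) 0 s := by
    intro s
    have := L.hasFDerivAt.comp_hasDerivAt s (hasDerivAt_exp_smul_const' (𝕂 := ℝ) X s)
    have h0 : L (X * NormedSpace.exp (s • X)) = 0 := by
      change u ᵥ* (X * NormedSpace.exp (s • X)) = 0
      rw [← vecMul_vecMul, h, zero_vecMul]
    exact this.congr_deriv h0
  have := is_const_of_deriv_eq_zero (fun s => (hd s).differentiableAt) (fun s => (hd s).deriv) t 0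
  simp only [zero_smul, NormedSpace.exp_zero] at this
  exact this.trans (vecMul_one u)

/-- `exists_one_param` for matrices with the entrywise topology, with no choice of norm in the
statement. -/
theorem exists_one_param_matrix {ι : Type*} [Fintype ι] [DecidableEq ι]
    {K S : Set (Matrix ι ι ℝ)} (hK : IsCompact K) (h1 : 1 ∈ K)
    (hmul : ∀ a ∈ K, ∀ b ∈ K, a * b ∈ K)
    (hSK : S ⊆ K) (hS : IsClosed S) (hS1 : 1 ∈ S) (hSmul : ∀ a ∈ S, ∀ b ∈ S, a * b ∈ S)
    (hSinv : ∀ a ∈ S, ∃ b ∈ S, a * b = 1 ∧ b * a = 1)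
    (hcl : 1 ∈ closure (K \ S)) :
    ∃ X : Matrix ι ι ℝ, (∀ t : ℝ, 0 ≤ t → NormedSpace.exp (t • X) ∈ K) ∧
      ∃ t : ℝ, 0 ≤ t ∧ NormedSpace.exp (t • X) ∉ S := by
  let _ : NormedRing (Matrix ι ι ℝ) := Matrix.linftyOpNormedRing
  let _ : NormedAlgebra ℝ (Matrix ι ι ℝ) := Matrix.linftyOpNormedAlgebra
  exact exists_one_param hK h1 hmul hSK hS hS1 hSmul hSinv hcl

/-- A row vector moved by a compact connected group is moved infinitesimally by one of its
one-parameter subgroups. -/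
theorem exists_generator {d : ℕ} (C : Subgroup (GL (Fin d) ℝ))
    (hC : IsCompact (C : Set (GL (Fin d) ℝ))) (hconn : IsConnected (C : Set (GL (Fin d) ℝ)))
    {u : Fin d → ℝ} (hu : ∃ g ∈ C, u ᵥ* (g : Matrix (Fin d) (Fin d) ℝ) ≠ u) :
    ∃ X : Matrix (Fin d) (Fin d) ℝ, u ᵥ* X ≠ 0 ∧ ∀ t : ℝ, 0 ≤ t →
      ∃ g ∈ C, (g : Matrix (Fin d) (Fin d) ℝ) = NormedSpace.exp (t • X) := by
  have hval : Continuous fun g : C => ((g : GL (Fin d) ℝ) : Matrix (Fin d) (Fin d) ℝ) :=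
    Units.continuous_val.comp continuous_subtype_val
  have hvm : Continuous fun M : Matrix (Fin d) (Fin d) ℝ => u ᵥ* M :=
    continuous_const.matrix_vecMul continuous_id
  let H : Subgroup C :=
    { carrier := {g | u ᵥ* ((g : GL (Fin d) ℝ) : Matrix (Fin d) (Fin d) ℝ) = u}
      one_mem' := by simp
      mul_mem' := fun {a b} ha hb => by
        simp only [Set.mem_ofPred_eq, Subgroup.coe_mul, Units.val_mul] at ha hb ⊢
        rw [← vecMul_vecMul, ha, hb]
      inv_mem' := fun {a} ha => by
        simp only [Set.mem_ofPred_eq] at ha ⊢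
        conv_lhs => rw [← ha]
        rw [vecMul_vecMul, Subgroup.coe_inv, Units.mul_inv, vecMul_one] }
  have hHclosed : IsClosed (H : Set C) := isClosed_eq (hvm.comp hval) continuous_const
  have hHn : (H : Set C) ∉ 𝓝 (1 : C) := by
    intro hn
    have : ConnectedSpace C := isConnected_iff_connectedSpace.1 hconn
    have huniv := IsClopen.eq_univ ⟨hHclosed, H.isOpen_of_mem_nhds hn⟩ ⟨1, H.one_mem⟩
    obtain ⟨g, hg, hgu⟩ := hu
    have : (⟨g, hg⟩ : C) ∈ (H : Set C) := huniv ▸ Set.mem_univ _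
    exact hgu this
  have hcl : (1 : C) ∈ closure ((H : Set C)ᶜ) := by
    rw [closure_compl, Set.mem_compl_iff, mem_interior_iff_mem_nhds]
    exact hHn
  set K : Set (Matrix (Fin d) (Fin d) ℝ) := Units.val '' (C : Set (GL (Fin d) ℝ)) with hKdef
  have hK : IsCompact K := hC.image Units.continuous_val
  have hKmul : ∀ a ∈ K, ∀ b ∈ K, a * b ∈ K := by
    rintro _ ⟨a, ha, rfl⟩ _ ⟨b, hb, rfl⟩
    exact ⟨a * b, C.mul_mem ha hb, rfl⟩
  obtain ⟨X, hX, t, ht, htS⟩ := exists_one_param_matrix (K := K) (S := {M | M ∈ K ∧ u ᵥ* M = u})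
    hK ⟨1, C.one_mem, rfl⟩ hKmul (fun M hM => hM.1)
    (hK.isClosed.inter (isClosed_eq hvm continuous_const))
    ⟨⟨1, C.one_mem, rfl⟩, vecMul_one u⟩
    (fun a ha b hb => ⟨hKmul a ha.1 b hb.1, by rw [← vecMul_vecMul, ha.2, hb.2]⟩)
    (by
      rintro _ ⟨⟨a, ha, rfl⟩, hau⟩
      refine ⟨_, ⟨⟨a⁻¹, C.inv_mem ha, rfl⟩, ?_⟩, a.mul_inv, a.inv_mul⟩
      exact H.inv_mem (x := ⟨a, ha⟩) hau)
    (map_mem_closure (f := fun g : C => ((g : GL (Fin d) ℝ) : Matrix (Fin d) (Fin d) ℝ)) hval hcl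
      fun g hg => ⟨⟨g, g.2, rfl⟩, fun h => hg h.2⟩)
  exact ⟨X, fun h => htS ⟨hX t ht, vecMul_exp_eq_self h t⟩, hX⟩



/-! ### The Fourier transform vanishes at infinity -/

/-- Let `V = ℝ^d`, `d ≥ 2`, and `C` a compact connected subgroup of
`GL(d,ℝ)` with no nonzero fixed vector.  If `lam` is a `C`-invariant Borel probability
measure on `V` giving measure zero to every proper vector subspace, then the Fourier
transform (characteristic function) `ξ ↦ ∫ exp(i⟨ξ,x⟩) dlam(x)` vanishes at infinity. -/
theorem stmt2 (d : ℕ) (hd : 2 ≤ d)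
    (C : Subgroup (GL (Fin d) ℝ))
    (hCcompact : IsCompact (C : Set (GL (Fin d) ℝ)))
    (hCconn : IsConnected (C : Set (GL (Fin d) ℝ)))
    (hfix : ∀ v : Fin d → ℝ,
      (∀ g ∈ C, Matrix.mulVec (g : Matrix (Fin d) (Fin d) ℝ) v = v) → v = 0)
    (lam : Measure (Fin d → ℝ)) [IsProbabilityMeasure lam]
    (hinv : ∀ g ∈ C,
      lam.map (fun v => Matrix.mulVec (g : Matrix (Fin d) (Fin d) ℝ) v) = lam)
    (hnull : ∀ W : Submodule ℝ (Fin d → ℝ), W ≠ ⊤ → lam (W : Set (Fin d → ℝ)) = 0) :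
    ∀ ε : ℝ, 0 < ε → ∃ R : ℝ, 0 < R ∧ ∀ ξ : Fin d → ℝ,
      R < Real.sqrt (∑ i, ξ i ^ 2) →
      ‖∫ x, Complex.exp (Complex.I * ((∑ i, ξ i * x i : ℝ) : ℂ)) ∂lam‖ < ε := by
  by_contra! hcon
  obtain ⟨ε, hε, hcon⟩ := hcon
  have hex : ∀ n : ℕ, ∃ ξ : Fin d → ℝ, (n + 1 : ℝ) < Real.sqrt (∑ i, ξ i ^ 2) ∧
      ε ≤ ‖∫ x, Complex.exp (Complex.I * ((∑ i, ξ i * x i : ℝ) : ℂ)) ∂lam‖ :=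
    fun n => hcon (n + 1) (by positivity)
  choose ξ hξ hξε using hex
  have hsqrt : ∀ v : Fin d → ℝ, Real.sqrt (∑ i, v i ^ 2) ≤ d * ‖v‖ := by
    intro v
    refine Real.sqrt_le_iff.2 ⟨by positivity, ?_⟩
    have hd1 : (1 : ℝ) ≤ d := by exact_mod_cast (by omega : 1 ≤ d)
    calc ∑ i, v i ^ 2 ≤ ∑ _i : Fin d, ‖v‖ ^ 2 := Finset.sum_le_sum fun i _ => by
          have := norm_le_pi_norm v i
          rw [Real.norm_eq_abs] at this
          rw [← sq_abs]; gcongr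
      _ = d * ‖v‖ ^ 2 := by simp
      _ ≤ (d * ‖v‖) ^ 2 := by nlinarith [sq_nonneg ‖v‖, mul_nonneg (sub_nonneg.2 hd1) (sq_nonneg ‖v‖)]
  have hnorm : Tendsto (fun n => ‖ξ n‖) atTop atTop := by
    have h1 : Tendsto (fun n : ℕ => (d : ℝ) * ‖ξ n‖) atTop atTop :=
      tendsto_atTop_mono (fun n => ((hξ n).le.trans (hsqrt _)).trans' (by linarith))
        tendsto_natCast_atTop_atTop
    exact (tendsto_const_mul_atTop_of_pos (by positivity)).1 h1
  have hpos : ∀ n, 0 < ‖ξ n‖ := fun n => by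
    rw [norm_pos_iff]
    intro h
    have := hξ n
    simp only [h, Pi.zero_apply, ne_eq, OfNat.ofNat_ne_zero, not_false_eq_true, zero_pow,
      Finset.sum_const_zero, Real.sqrt_zero] at this
    linarith [(Nat.cast_nonneg n : (0 : ℝ) ≤ n)]
  obtain ⟨u, hu, φ, hφ, hlim⟩ := (isCompact_sphere (0 : Fin d → ℝ) 1).tendsto_subseq
    (x := fun n => ‖ξ n‖⁻¹ • ξ n) (fun n => by
      simp only [mem_sphere_zero_iff_norm, norm_smul, norm_inv, norm_norm]
      exact inv_mul_cancel₀ (hpos n).ne')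
  have hu0 : u ≠ 0 := by
    rintro rfl
    simp at hu
  have hmove : ∃ g ∈ C, u ᵥ* (g : Matrix (Fin d) (Fin d) ℝ) ≠ u := by
    by_contra! h
    obtain ⟨v, hv, hvC⟩ := exists_mulVec_fixed C hCcompact hu0 h
    exact hv (hfix v hvC)
  obtain ⟨X, huX, hX⟩ := exists_generator C hCcompact hCconn hmove
  have hinvX : ∀ s : ℝ, 0 ≤ s → lam.map (fun v => NormedSpace.exp (s • X) *ᵥ v) = lam := by
    intro s hs
    obtain ⟨g, hg, hgX⟩ := hX s hs
    rw [← hgX]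
    exact hinv g hg
  have hnullX : lam {x | u ⬝ᵥ (X *ᵥ x) = 0} = 0 := by
    have := hnull (LinearMap.ker (dotProductBilin ℝ ℝ (u ᵥ* X))) (fun htop => huX (by
      have h : u ᵥ* X ∈ LinearMap.ker (dotProductBilin ℝ ℝ (u ᵥ* X)) := htop ▸ trivial
      exact dotProduct_self_eq_zero.1 h))
    convert this using 2
    ext x
    simp [dotProduct_mulVec]
  have hfin := (tendsto_fourier_zero X lam hinvX hnullX (ξ := ξ ∘ φ)
    (hnorm.comp hφ.tendsto_atTop) hlim).norm
  rw [norm_zero] at hfin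
  exact absurd (ge_of_tendsto' hfin fun n => hξε (φ n)) (not_le.2 hε)
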